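/- Let k be a field of characteristic zero. Let P = k[x₁, x₂, x₃, …] be the polynomial ring over k on a countably infinite set of variables, and let 𝔪 ⊆ P be the ideal generated by all the variables (equivalently, the kernel of the k-algebra homomorphism P → k sending every variable to 0). Let R = lim_n P/𝔪ⁿ be the 𝔪-adic completion of P, and let 𝔪_R = ker(ε) be the augmentation ideal of R, where ε : R → k is the ring homomorphism induced by sending every variable to 0. Then the canonical ring homomorphism R → lim_n R/𝔪_Rⁿ from R to its 𝔪_R-adic completion is not surjective; in particular, R is not 𝔪_R-adically complete. -/

import Mathlib

noncomputable section

open MvPolynomial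

/-- Evaluation at zero: the `k`-algebra homomorphism `P = k[x₁, x₂, …] → k` sending every
variable to `0`, viewed as a ring homomorphism. -/
def evalZero (k : Type*) [Field k] : MvPolynomial ℕ k →+* k :=
  (aeval (fun _ : ℕ => (0 : k)) : MvPolynomial ℕ k →ₐ[k] k).toRingHom

/-- The augmentation ideal `𝔪` of `P = k[x₁, x₂, …]`: the kernel of the `k`-algebra
homomorphism sending every variable to `0` (equivalently, the ideal generated by all
the variables). -/
def mAug (k : Type*) [Field k] : Ideal (MvPolynomial ℕ k) :=
  RingHom.ker (evalZero k)

theorem evalZero_surjective (k : Type*) [Field k] : Function.Surjective (evalZero k) :=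
  fun a => ⟨C a, by simp [evalZero]⟩

/-- `R = lim_n P/𝔪ⁿ`, the `𝔪`-adic completion of `P = k[x₁, x₂, …]`, i.e. the power series
ring `k⟦x₁, x₂, …⟧` on countably many generators. -/
abbrev Rcompletion (k : Type*) [Field k] : Type _ :=
  AdicCompletion (mAug k) (MvPolynomial ℕ k)

/-- The augmentation `ε : R → k`, the ring homomorphism induced by sending every variable
to `0`: the composite of the canonical projection `R → P ⧸ 𝔪¹ = P ⧸ 𝔪` with the
isomorphism `P ⧸ 𝔪 ≅ k` induced by evaluation at zero. -/
def epsilonAug (k : Type*) [Field k] : Rcompletion k →+* k :=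
  (RingHom.quotientKerEquivOfSurjective (evalZero_surjective k)).toRingHom.comp
    ((Ideal.quotEquivOfEq (pow_one (mAug k))).toRingHom.comp
      (AdicCompletion.evalₐ (mAug k) 1).toRingHom)

/-- Set the first `i` variables to zero. -/
def killMap (k : Type*) [Field k] (n i : ℕ) :
    MvPolynomial (Fin n) k →ₐ[k] MvPolynomial (Fin n) k :=
  aeval (fun j : Fin n => if j.1 < i then 0 else X j)

/-- The prime ideal generated by the first `i` variables. -/
def killIdeal (k : Type*) [Field k] (n i : ℕ) : Ideal (MvPolynomial (Fin n) k) :=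
  RingHom.ker (killMap k n i)

instance killIdeal_isPrime (k : Type*) [Field k] (n i : ℕ) : (killIdeal k n i).IsPrime :=
  RingHom.ker_isPrime _

theorem killMap_comp (k : Type*) [Field k] (n i : ℕ) :
    (killMap k n (i+1)).comp (killMap k n i) = killMap k n (i+1) := by
  apply MvPolynomial.algHom_ext
  intro j
  by_cases h : j.1 < i
  · simp [killMap, h, not_lt.2 (Nat.le_of_lt h)]
  · simp [killMap, h]

theorem killIdeal_lt (k : Type*) [Field k] (n i : ℕ) (hi : i < n) :
    killIdeal k n i < killIdeal k n (i+1) := by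
  refine lt_of_le_of_ne ?_ ?_
  · intro p hp
    have hp' : killMap k n i p = 0 := hp
    change killMap k n (i+1) p = 0
    rw [← killMap_comp, AlgHom.comp_apply, hp', map_zero]
  · intro h
    have h1 : (X ⟨i, hi⟩ : MvPolynomial (Fin n) k) ∈ killIdeal k n (i+1) := by
      change killMap k n (i+1) _ = 0
      simp [killMap]
    rw [← h] at h1
    have h2 : killMap k n i (X ⟨i, hi⟩) = 0 := h1
    simp [killMap] at h2

theorem le_height_killIdeal (k : Type*) [Field k] (n i : ℕ) (hi : i ≤ n) :
    (i : ℕ∞) ≤ (killIdeal k n i).height := by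
  induction i with
  | zero => simp
  | succ i ih =>
    have := Ideal.height_add_one_le_of_lt_of_isPrime (killIdeal_lt k n i (by omega))
    refine le_trans ?_ this
    push_cast
    gcongr
    exact ih (by omega)

theorem killIdeal_le_span (k : Type*) [Field k] (n i : ℕ) :
    killIdeal k n i ≤ Ideal.span (Set.range (X : Fin n → MvPolynomial (Fin n) k)) := by
  intro p hp
  have hp' : killMap k n i p = 0 := hp
  set J := Ideal.span (Set.range (X : Fin n → MvPolynomial (Fin n) k)) with hJ
  have hX : ∀ j, Ideal.Quotient.mk J (X j) = 0 := fun j =>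
    Ideal.Quotient.eq_zero_iff_mem.2 (Ideal.subset_span ⟨j, rfl⟩)
  have : (Ideal.Quotient.mkₐ k J).comp (killMap k n i) = Ideal.Quotient.mkₐ k J := by
    apply MvPolynomial.algHom_ext
    intro j
    by_cases h : j.1 < i
    · simp [killMap, h, hX]
    · simp [killMap, h]
  have h2 := congrArg (fun f => f p) this
  simp only [AlgHom.comp_apply, hp', map_zero] at h2
  exact Ideal.Quotient.eq_zero_iff_mem.1 h2.symm

theorem derivation_pow_mem {k A : Type*} [CommRing k] [CommRing A] [Algebra k A]
    (D : Derivation k A A) (I : Ideal A) (n : ℕ) : ∀ x ∈ I ^ (n+1), D x ∈ I ^ n := by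
  induction n with
  | zero => simp
  | succ n ih =>
    intro x hx
    rw [pow_succ] at hx
    refine Submodule.mul_induction_on hx ?_ ?_
    · intro a ha b hb
      rw [Derivation.leibniz]
      refine add_mem ?_ ?_
      · exact Ideal.mul_mem_right _ _ ha
      · rw [smul_eq_mul, pow_succ, mul_comm b]
        exact Ideal.mul_mem_mul (ih a ha) hb
    · intro a b ha hb
      rw [map_add]
      exact add_mem ha hb

/-- The Fermat form. -/
def fermat (k : Type*) [Field k] (n : ℕ) : MvPolynomial (Fin n) k :=
  ∑ j : Fin n, X j ^ (n+2)

theorem X_mem_killIdeal (k : Type*) [Field k] (n : ℕ) (j : Fin n) :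
    (X j : MvPolynomial (Fin n) k) ∈ killIdeal k n n := by
  change killMap k n n _ = 0
  simp [killMap]

theorem fermat_bound (k : Type*) [Field k] [CharZero k] (n : ℕ) :
    ∃ K₀ : ℕ, ∀ K ≥ K₀, ∀ S : Finset (MvPolynomial (Fin n) k),
      (∀ s ∈ S, s ∈ killIdeal k n n) →
      fermat k n ∈ (Ideal.span (S : Set (MvPolynomial (Fin n) k))) ^ 2 ⊔ killIdeal k n n ^ K →
      n ≤ S.card := by
  set m := killIdeal k n n with hm
  set J : Ideal (MvPolynomial (Fin n) k) :=
    Ideal.span (Set.range fun j : Fin n => (X j : MvPolynomial (Fin n) k) ^ (n+1)) with hJ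
  have hrad : m ≤ J.radical := by
    refine (killIdeal_le_span k n n).trans (Ideal.span_le.2 ?_)
    rintro _ ⟨j, rfl⟩
    exact ⟨n+1, Ideal.subset_span ⟨j, rfl⟩⟩
  obtain ⟨K, hK⟩ := Ideal.exists_pow_le_of_le_radical_of_fg hrad (IsNoetherian.noetherian m)
  refine ⟨K + 2, fun K' hK' S hS hF => ?_⟩
  set I := Ideal.span (S : Set (MvPolynomial (Fin n) k)) with hI
  have hIm : I ≤ m := Ideal.span_le.2 hS
  have hF' : fermat k n ∈ I ^ 2 ⊔ m ^ (K+2) :=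
by
    have hle : I ^ 2 ⊔ m ^ K' ≤ I ^ 2 ⊔ m ^ (K+2) :=
      sup_le_sup_left (Ideal.pow_le_pow_right hK') _
    exact hle hF
  have hsup : J ≤ I ⊔ m • J := by
    refine Ideal.span_le.2 ?_
    rintro _ ⟨j, rfl⟩
    obtain ⟨a, ha, b, hb, hab⟩ := Submodule.mem_sup.1 hF'
    have h1 : pderiv j (fermat k n) ∈ I ⊔ m • J := by
      rw [← hab, map_add]
      refine Submodule.add_mem_sup ?_ ?_
      · simpa using derivation_pow_mem (pderiv j) I 1 a ha
      · have := derivation_pow_mem (pderiv j) m (K+1) b hb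
        rw [pow_succ, mul_comm] at this
        exact Ideal.mul_mono_right hK this
    have h2 : pderiv j (fermat k n) = C ((n+2 : ℕ) : k) * X j ^ (n+1) := by
      classical
      rw [fermat, map_sum, Finset.sum_eq_single j]
      · rw [pderiv_pow, pderiv_X_self, mul_one, map_natCast]; rfl
      · intro i _ hij
        rw [pderiv_pow, pderiv_X_of_ne hij, mul_zero]
      · simp
    have h3 : (X j : MvPolynomial (Fin n) k) ^ (n+1) =
        C (((n+2 : ℕ) : k)⁻¹) * pderiv j (fermat k n) := by
      rw [h2, ← mul_assoc, ← C_mul, inv_mul_cancel₀ (Nat.cast_ne_zero.2 (by omega)), C_1, one_mul]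
    change (X j : MvPolynomial (Fin n) k) ^ (n+1) ∈ I ⊔ m • J
    rw [h3]
    exact Ideal.mul_mem_left _ _ h1
  obtain ⟨r, hr1, hr⟩ := Submodule.exists_sub_one_mem_and_smul_le_of_fg_of_le_sup
    (IsNoetherian.noetherian J) le_rfl hsup
  have hmin : m ∈ I.minimalPrimes := by
    refine ⟨⟨inferInstanceAs (killIdeal k n n).IsPrime, hIm⟩, ?_⟩
    rintro p ⟨hp, hIp⟩ hpm
    have hrp : r ∉ p := by
      intro h
      have : (1 : MvPolynomial (Fin n) k) ∈ m := by
        have := sub_mem (hpm h) hr1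
        simpa using this
      exact (killIdeal_isPrime k n n).ne_top ((Ideal.eq_top_iff_one _).2 this)
    have hJp : J ≤ p := by
      intro x hx
      have : r * x ∈ p := hIp (hr (Submodule.smul_mem_pointwise_smul x r J hx))
      exact (hp.mem_or_mem this).resolve_left hrp
    exact hrad.trans (hp.radical_le_iff.2 hJp)
  have h1 := Ideal.height_le_card_of_mem_minimalPrimes_span_finset hmin
  have h2 := (le_height_killIdeal k n n le_rfl).trans h1
  exact_mod_cast h2

/-- Projection onto the variables of the `n`th block. -/
def blockMap (k : Type*) [Field k] (n : ℕ) : MvPolynomial ℕ k →ₐ[k] MvPolynomial (Fin n) k :=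
  aeval (fun v : ℕ => if h : v.unpair.1 = n ∧ v.unpair.2 < n then X ⟨v.unpair.2, h.2⟩ else 0)

/-- The `n`th term of the series. -/
def gTerm (k : Type*) [Field k] (n : ℕ) : MvPolynomial ℕ k :=
  ∑ j : Fin n, X (Nat.pair n j) ^ (n+2)

theorem blockMap_gTerm_self (k : Type*) [Field k] (n : ℕ) :
    blockMap k n (gTerm k n) = fermat k n := by
  simp [blockMap, gTerm, fermat]

theorem blockMap_gTerm_ne (k : Type*) [Field k] (n l : ℕ) (h : l ≠ n) :
    blockMap k n (gTerm k l) = 0 := by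
  simp [blockMap, gTerm, h]

theorem gTerm_mem (k : Type*) [Field k] (n : ℕ) : gTerm k n ∈ mAug k ^ (n+2) := by
  refine sum_mem fun j _ => Ideal.pow_mem_pow ?_ _
  change evalZero k _ = 0
  simp [evalZero]

theorem blockMap_mAug (k : Type*) [Field k] (n : ℕ) (p : MvPolynomial ℕ k) (hp : p ∈ mAug k) :
    blockMap k n p ∈ killIdeal k n n := by
  have hp' : aeval (fun _ : ℕ => (0 : k)) p = 0 := hp
  change killMap k n n _ = 0
  have : (killMap k n n).comp (blockMap k n) =
      (Algebra.ofId k _).comp (aeval (fun _ : ℕ => (0 : k))) := by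
    apply MvPolynomial.algHom_ext
    intro v
    by_cases h : v.unpair.1 = n ∧ v.unpair.2 < n
    · simp [killMap, blockMap, h]
    · simp [blockMap, h]
  rw [← AlgHom.comp_apply, this, AlgHom.comp_apply, hp', map_zero]

theorem epsilonAug_of (k : Type*) [Field k] (p : MvPolynomial ℕ k) :
    epsilonAug k (algebraMap (MvPolynomial ℕ k) (Rcompletion k) p) = evalZero k p := by
  rfl

theorem mem_ker_eps (k : Type*) [Field k] (a : Rcompletion k)
    (ha : a ∈ RingHom.ker (epsilonAug k)) (K : ℕ) (hK : 1 ≤ K) :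
    ∃ p ∈ mAug k, AdicCompletion.evalₐ (mAug k) K a = Ideal.Quotient.mk _ p := by
  obtain ⟨x, rfl⟩ := AdicCompletion.mk_surjective _ _ a
  refine ⟨x.val K, ?_, by rw [AdicCompletion.evalₐ_mk]⟩
  have h1 := AdicCompletion.Ideal.mk_eq_mk (mAug k) hK x
  have h2 : AdicCompletion.evalₐ (mAug k) 1 (AdicCompletion.mk _ _ x) = 0 := by
    have h3 : epsilonAug k (AdicCompletion.mk _ _ x) = 0 := ha
    change (RingHom.quotientKerEquivOfSurjective (evalZero_surjective k))
      ((Ideal.quotEquivOfEq (pow_one (mAug k)))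
        (AdicCompletion.evalₐ (mAug k) 1 (AdicCompletion.mk _ _ x))) = 0 at h3
    have h4 := (RingEquiv.map_eq_zero_iff _).1 h3
    exact (RingEquiv.map_eq_zero_iff (Ideal.quotEquivOfEq (pow_one (mAug k)))).1 h4
  rw [AdicCompletion.evalₐ_mk] at h2
  rw [h2, Ideal.Quotient.eq_zero_iff_mem, pow_one] at h1
  exact h1

theorem exists_finset_of_mem_sq {A : Type*} [CommRing A] (M : Ideal A) (x : A)
    (hx : x ∈ M ^ 2) : ∃ S : Finset A, (∀ s ∈ S, s ∈ M) ∧ x ∈ Ideal.span (S : Set A) ^ 2 := by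
  classical
  rw [pow_two] at hx
  refine Submodule.mul_induction_on hx ?_ ?_
  · intro a ha b hb
    refine ⟨{a, b}, by simp [ha, hb], ?_⟩
    rw [pow_two]
    exact Ideal.mul_mem_mul (Ideal.subset_span (by simp)) (Ideal.subset_span (by simp))
  · rintro a b ⟨S, hS, ha⟩ ⟨T, hT, hb⟩
    refine ⟨S ∪ T, ?_, ?_⟩
    · intro s hs
      rcases Finset.mem_union.1 hs with h | h
      exacts [hS s h, hT s h]
    · refine add_mem (Ideal.pow_right_mono (Ideal.span_mono ?_) 2 ha)
        (Ideal.pow_right_mono (Ideal.span_mono ?_) 2 hb) <;> simp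

theorem no_limit (k : Type*) [Field k] [CharZero k] (L : Rcompletion k)
    (hL2 : L ∈ RingHom.ker (epsilonAug k) ^ 2)
    (hL : ∀ K, AdicCompletion.evalₐ (mAug k) K L =
      Ideal.Quotient.mk _ (∑ l ∈ Finset.range K, gTerm k l)) : False := by
  classical
  obtain ⟨S, hS, hLS⟩ := exists_finset_of_mem_sq _ L hL2
  set n := S.card + 1 with hn
  obtain ⟨K₀, hK₀⟩ := fermat_bound k n
  set K := K₀ + n + 1 with hKdef
  have hle : mAug k ^ K ≤ (killIdeal k n n ^ K).comap (blockMap k n).toRingHom := by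
    rw [← Ideal.map_le_iff_le_comap, Ideal.map_pow]
    refine Ideal.pow_right_mono (Ideal.map_le_iff_le_comap.2 ?_) K
    intro p hp
    exact blockMap_mAug k n p hp
  let ψ : Rcompletion k →+* MvPolynomial (Fin n) k ⧸ killIdeal k n n ^ K :=
    (Ideal.quotientMap _ (blockMap k n).toRingHom hle).comp
      (AdicCompletion.evalₐ (mAug k) K).toRingHom
  have hψL : ψ L = Ideal.Quotient.mk _ (fermat k n) := by
    have h1 : blockMap k n (∑ l ∈ Finset.range K, gTerm k l) = fermat k n := by
      rw [map_sum, Finset.sum_eq_single n]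
      · exact blockMap_gTerm_self k n
      · intro l _ hl
        exact blockMap_gTerm_ne k n l hl
      · intro h
        exact absurd (Finset.mem_range.2 (by omega)) h
    change Ideal.quotientMap _ (blockMap k n).toRingHom hle
      (AdicCompletion.evalₐ (mAug k) K L) = _
    rw [hL K, Ideal.quotientMap_mk, ← h1]
    rfl
  have hlift : ∀ s ∈ S, ∃ t ∈ killIdeal k n n, ψ s = Ideal.Quotient.mk _ t := by
    intro s hs
    obtain ⟨p, hp, hp2⟩ := mem_ker_eps k s (hS s hs) K (by omega)
    refine ⟨blockMap k n p, blockMap_mAug k n p hp, ?_⟩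
    change Ideal.quotientMap _ (blockMap k n).toRingHom hle
      (AdicCompletion.evalₐ (mAug k) K s) = _
    rw [hp2, Ideal.quotientMap_mk]
    rfl
  choose! t ht ht2 using hlift
  have hcard := hK₀ K (by omega) (S.image t) (by
    intro s hs
    obtain ⟨a, ha, rfl⟩ := Finset.mem_image.1 hs
    exact ht a ha) (by
    rw [← Ideal.mem_quotient_iff_mem_sup, ← hψL, Ideal.map_pow]
    have h1 := Ideal.mem_map_of_mem ψ hLS
    rw [Ideal.map_pow] at h1
    refine Ideal.pow_right_mono ?_ 2 h1
    rw [Ideal.map_span, Ideal.span_le]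
    rintro _ ⟨s, hs, rfl⟩
    rw [SetLike.mem_coe, ht2 s hs]
    exact Ideal.mem_map_of_mem _ (Ideal.subset_span (by
      simpa using ⟨s, hs, rfl⟩)))
  have := Finset.card_image_le (s := S) (f := t)
  omega

theorem not_precomplete (k : Type*) [Field k] [CharZero k] :
    ¬ IsPrecomplete (RingHom.ker (epsilonAug k)) (Rcompletion k) := by
  intro hpre
  set M := RingHom.ker (epsilonAug k) with hM
  let ι : MvPolynomial ℕ k →+* Rcompletion k := algebraMap _ _
  have hι : ∀ p ∈ mAug k, ι p ∈ M := fun p hp => by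
    change epsilonAug k (algebraMap (MvPolynomial ℕ k) (Rcompletion k) p) = 0
    rw [epsilonAug_of]; exact hp
  have hιpow : ∀ (K : ℕ), ∀ p ∈ mAug k ^ K, ι p ∈ M ^ K := by
    intro K p hp
    have h1 := Ideal.mem_map_of_mem ι hp
    rw [Ideal.map_pow] at h1
    exact Ideal.pow_right_mono (Ideal.map_le_iff_le_comap.2 hι) K h1
  let s : ℕ → Rcompletion k := fun N => ι (∑ l ∈ Finset.range N, gTerm k l)
  obtain ⟨L, hL⟩ := hpre.prec' s (by
    intro a b hab
    rw [SModEq.sub_mem, smul_eq_mul, Ideal.mul_top, ← neg_mem_iff, neg_sub, ← map_sub,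
      ← Finset.sum_Ico_eq_sub _ hab]
    refine hιpow a _ (sum_mem fun l hl => ?_)
    have := Finset.mem_Ico.1 hl
    exact Ideal.pow_le_pow_right (by omega) (gTerm_mem k l))
  have hL' : ∀ N, s N - L ∈ M ^ N := by
    intro N
    have := hL N
    rwa [SModEq.sub_mem, smul_eq_mul, Ideal.mul_top] at this
  refine no_limit k L ?_ ?_
  · have h1 : s 2 ∈ M ^ 2 := hιpow 2 _ (sum_mem fun l _ =>
      Ideal.pow_le_pow_right (by omega) (gTerm_mem k l))
    have := sub_mem h1 (hL' 2)
    simpa using this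
  · intro K
    rcases Nat.eq_zero_or_pos K with rfl | hK
    · rw [← sub_eq_zero]
      obtain ⟨q, hq⟩ := Ideal.Quotient.mk_surjective
        (AdicCompletion.evalₐ (mAug k) 0 L)
      rw [← hq, ← map_sub, Ideal.Quotient.eq_zero_iff_mem]
      simp
    · have h1 : M.map (AdicCompletion.evalₐ (mAug k) K).toRingHom ≤
          (mAug k).map (Ideal.Quotient.mk (mAug k ^ K)) := by
        rw [Ideal.map_le_iff_le_comap]
        intro a ha
        obtain ⟨p, hp, hp2⟩ := mem_ker_eps k a ha K hK
        rw [Ideal.mem_comap]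
        change AdicCompletion.evalₐ (mAug k) K a ∈ _
        rw [hp2]
        exact Ideal.mem_map_of_mem _ hp
      have h2 := Ideal.mem_map_of_mem (AdicCompletion.evalₐ (mAug k) K).toRingHom (hL' K)
      rw [Ideal.map_pow] at h2
      have h3 := Ideal.pow_right_mono h1 K h2
      rw [← Ideal.map_pow, Ideal.map_quotient_self, Ideal.mem_bot] at h3
      have h4 : AdicCompletion.evalₐ (mAug k) K (s K) - AdicCompletion.evalₐ (mAug k) K L = 0 := by
        rw [← map_sub]; exact h3
      rw [← sub_eq_zero.1 h4]
      exact AdicCompletion.evalₐ_of _ _ _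

/-- Let `k` be a field of characteristic zero, `P = k[x₁, x₂, …]` the polynomial ring on
countably many variables, `𝔪` its augmentation ideal, `R = lim_n P/𝔪ⁿ` the `𝔪`-adic
completion of `P`, and `𝔪_R = ker ε` the augmentation ideal of `R`, where `ε : R → k` is
induced by sending every variable to `0` (so that `ε` restricted to `P` is evaluation at
zero). Then the canonical ring homomorphism `R → lim_n R/𝔪_Rⁿ` to the `𝔪_R`-adic
completion is not surjective; in particular `R` is not `𝔪_R`-adically complete. -/
theorem adicCompletion_of_polynomial_ring_not_complete
    (k : Type*) [Field k] [CharZero k] :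
    (∀ p : MvPolynomial ℕ k,
        epsilonAug k (algebraMap (MvPolynomial ℕ k) (Rcompletion k) p) =
          aeval (fun _ : ℕ => (0 : k)) p) ∧
    ¬ Function.Surjective
        (algebraMap (Rcompletion k)
          (AdicCompletion (RingHom.ker (epsilonAug k)) (Rcompletion k))) ∧
    ¬ IsAdicComplete (RingHom.ker (epsilonAug k)) (Rcompletion k) := by
  have hns : ¬ IsPrecomplete (RingHom.ker (epsilonAug k)) (Rcompletion k) := not_precomplete k
  refine ⟨fun p => epsilonAug_of k p, fun h => hns ?_, fun h => hns h.toIsPrecomplete⟩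
  exact (AdicCompletion.of_surjective_iff (I := RingHom.ker (epsilonAug k))
    (M := Rcompletion k)).1 h
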